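/- arXiv:2310.04819 — 9 statements merged into one kernel-verified Lean document; each statement's English description precedes it below -/
import Mathlib

section
/- Let n and m be positive natural numbers, let {K_i^{(1)}}_{i∈I} and {K_j^{(2)}}_{j∈J} be finite families of n×n complex matrices satisfying the Kraus completeness relations Σ_i (K_i^{(1)})† K_i^{(1)} = 1 and Σ_j (K_j^{(2)})† K_j^{(2)} = 1. Define for each pair (i,j) the switch operator W_{ij} = (K_i^{(1)} K_j^{(2)}) ⊗ E₀₀ + (K_j^{(2)} K_i^{(1)}) ⊗ E₁₁, where E₀₀ and E₁₁ are the 2×2 matrices with a single 1 in position (0,0) and (1,1) respectively and ⊗ denotes the Kronecker product. Then Σ_{i,j} W_{ij}† W_{ij} = 1 (the (2n)×(2n) identity), i.e. the switch operators form a valid set of Kraus operators. -/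
/-!
The projections `E00` and `E11` are orthogonal, so the cross terms of `Wᴴ * W` vanish and
`Wᴴ * W = (AᴴA) ⊗ₖ E00 + (BᴴB) ⊗ₖ E11` with `A = K1 i * K2 j` and `B = K2 j * K1 i`
(`switch_conjTranspose_mul_self`). Composing two Kraus families in either order gives a Kraus
family (`kraus_comp`), so the double sum is `1 ⊗ₖ E00 + 1 ⊗ₖ E11 = 1 ⊗ₖ 1 = 1`.
-/

open Matrix
open scoped Kronecker

/-- `E₀₀ = |0⟩⟨0|` as a 2×2 complex matrix. -/
noncomputable def E00 : Matrix (Fin 2) (Fin 2) ℂ := !![1, 0; 0, 0]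

/-- `E₁₁ = |1⟩⟨1|` as a 2×2 complex matrix. -/
noncomputable def E11 : Matrix (Fin 2) (Fin 2) ℂ := !![0, 0; 0, 1]

/-- The product family `A i * B j` is complete: `A` is summed first, collapsing the inner factor
of `(B j)ᴴ * ((A i)ᴴ * A i) * B j` to the identity. -/
lemma kraus_comp {n : ℕ} {I J : Type*} [Fintype I] [Fintype J]
    (A : I → Matrix (Fin n) (Fin n) ℂ) (B : J → Matrix (Fin n) (Fin n) ℂ)
    (hA : ∑ i, (A i)ᴴ * A i = 1) (hB : ∑ j, (B j)ᴴ * B j = 1) :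
    ∑ i, ∑ j, (A i * B j)ᴴ * (A i * B j) = 1 := by
  rw [Finset.sum_comm, ← hB]
  refine Finset.sum_congr rfl fun j _ => ?_
  calc ∑ i, (A i * B j)ᴴ * (A i * B j)
      = ∑ i, (B j)ᴴ * ((A i)ᴴ * A i) * B j := by
        simp only [conjTranspose_mul, Matrix.mul_assoc]
    _ = (B j)ᴴ * B j := by
        rw [← Finset.sum_mul, ← Finset.mul_sum, hA, Matrix.mul_one]

lemma switch_conjTranspose_mul_self {n : ℕ} (A B : Matrix (Fin n) (Fin n) ℂ) :
    (A ⊗ₖ E00 + B ⊗ₖ E11)ᴴ * (A ⊗ₖ E00 + B ⊗ₖ E11)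
      = (Aᴴ * A) ⊗ₖ E00 + (Bᴴ * B) ⊗ₖ E11 := by
  have h00 : E00ᴴ * E00 = E00 := by
    ext a b; fin_cases a <;> fin_cases b <;> simp [E00, mul_apply]
  have h11 : E11ᴴ * E11 = E11 := by
    ext a b; fin_cases a <;> fin_cases b <;> simp [E11, mul_apply]
  have h01 : E00ᴴ * E11 = 0 := by
    ext a b; fin_cases a <;> fin_cases b <;> simp [E00, E11, mul_apply]
  have h10 : E11ᴴ * E00 = 0 := by
    ext a b; fin_cases a <;> fin_cases b <;> simp [E00, E11, mul_apply]
  simp only [conjTranspose_add, conjTranspose_kronecker, Matrix.add_mul, Matrix.mul_add,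
    ← mul_kronecker_mul, h00, h11, h01, h10, kronecker_zero, add_zero, zero_add]

lemma sum_kronecker_right {n : ℕ} {ι : Type*} (s : Finset ι)
    (f : ι → Matrix (Fin n) (Fin n) ℂ) (E : Matrix (Fin 2) (Fin 2) ℂ) :
    ∑ i ∈ s, f i ⊗ₖ E = (∑ i ∈ s, f i) ⊗ₖ E := by
  ext a b
  simp [Matrix.sum_apply, Finset.sum_mul]

/-- The switch operators `W_{ij} = K_i⁽¹⁾K_j⁽²⁾ ⊗ E₀₀ + K_j⁽²⁾K_i⁽¹⁾ ⊗ E₁₁` built from two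
Kraus families form a valid Kraus family: `∑_{i,j} W_{ij}† W_{ij} = 1`. -/
theorem switch_kraus_completeness {n : ℕ} (hn : 0 < n)
    {I J : Type*} [Fintype I] [Fintype J]
    (K1 : I → Matrix (Fin n) (Fin n) ℂ) (K2 : J → Matrix (Fin n) (Fin n) ℂ)
    (h1 : ∑ i, (K1 i)ᴴ * K1 i = 1) (h2 : ∑ j, (K2 j)ᴴ * K2 j = 1) :
    ∑ i, ∑ j,
      ((K1 i * K2 j) ⊗ₖ E00 + (K2 j * K1 i) ⊗ₖ E11)ᴴ *
        ((K1 i * K2 j) ⊗ₖ E00 + (K2 j * K1 i) ⊗ₖ E11)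
      = (1 : Matrix (Fin n × Fin 2) (Fin n × Fin 2) ℂ) := by
  have hE : E00 + E11 = 1 := by
    ext a b; fin_cases a <;> fin_cases b <;> simp [E00, E11]
  -- `K2 j * K1 i` is the composition with the roles of the two families exchanged.
  have h21 : ∑ i, ∑ j, (K2 j * K1 i)ᴴ * (K2 j * K1 i) = 1 := by
    rw [Finset.sum_comm]
    exact kraus_comp K2 K1 h2 h1
  simp only [switch_conjTranspose_mul_self, Finset.sum_add_distrib, sum_kronecker_right]
  rw [kraus_comp K1 K2 h1 h2, h21, ← kronecker_add, hE, one_kronecker_one]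
end

section
/- Let d ≥ 2 and let ρ be a (2d)×(2d) positive semidefinite complex Hermitian matrix with trace 1 and rank at most 2d−2. Let λ₁ ≥ λ₂ ≥ ⋯ ≥ λ_{2d} be its eigenvalues arranged in nonincreasing order. Then λ₁ − λ_{2d−1} − 2√(λ_{2d−2} λ_{2d}) > 0; that is, the absolute-separability eigenvalue condition λ₁ − λ_{2d−1} − 2√(λ_{2d−2} λ_{2d}) ≤ 0 fails, so no state of rank at most 2d−2 in dimension 2⊗d is absolutely separable. -/
/-!
Since `ρ` is Hermitian, its rank is the number of nonzero eigenvalues, so rank at most `2d - 2`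
forces the two smallest eigenvalues of a positive semidefinite `ρ` to vanish. The quantity in
question then collapses to the largest eigenvalue, which is positive because the eigenvalues
are at most that large and sum to `1`.
-/

open Matrix
open scoped ComplexOrder

/-- In dimension `2 ⊗ d`, no state of rank at most `2d−2` satisfies the absolute-separability
eigenvalue condition `λ₁ − λ_{2d−1} − 2√(λ_{2d−2} λ_{2d}) ≤ 0`: the quantity is strictly
positive, so there is no absolutely separable state of rank `≤ 2d−2`. -/
theorem no_AS_state_of_low_rank {d : ℕ} (hd : 2 ≤ d)
    (ρ : Matrix (Fin (2*d)) (Fin (2*d)) ℂ)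
    (hherm : ρ.IsHermitian) (hpsd : ρ.PosSemidef) (htr : ρ.trace = 1)
    (hrank : ρ.rank ≤ 2*d - 2)
    (μ : Fin (2*d) → ℝ) (hanti : Antitone μ)
    (hperm : ∃ σ : Equiv.Perm (Fin (2*d)), μ = hherm.eigenvalues ∘ σ) :
    0 < μ ⟨0, by omega⟩ - μ ⟨2*d - 2, by omega⟩ -
      2 * Real.sqrt (μ ⟨2*d - 3, by omega⟩ * μ ⟨2*d - 1, by omega⟩) := by
  obtain ⟨σ, hσ⟩ := hperm
  have hnn : ∀ i, 0 ≤ μ i := fun i => by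
    rw [hσ]; exact hpsd.eigenvalues_nonneg (σ i)
  have hsum : ∑ i, μ i = 1 := by
    have h := hherm.trace_eq_sum_eigenvalues
    rw [htr] at h
    rw [hσ]
    simp only [Function.comp_apply]
    rw [Equiv.sum_comp σ hherm.eigenvalues]
    apply Complex.ofReal_injective
    simpa using h.symm
  have h0 : 0 < μ ⟨0, by omega⟩ := by
    by_contra hle
    have hz : ∀ i, μ i = 0 := fun i =>
      le_antisymm ((hanti (Fin.mk_le_mk.2 (Nat.zero_le i.1))).trans (not_lt.1 hle)) (hnn i)
    simp [hz] at hsum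
  have h2 : μ ⟨2*d - 2, by omega⟩ = 0 := by
    by_contra hne
    have hpos := lt_of_le_of_ne (hnn _) (Ne.symm hne)
    -- By monotonicity the first `2d - 1` values are nonzero, exceeding the rank.
    have hinj : Function.Injective (fun i : Fin (2*d - 1) =>
        (⟨σ ⟨i.1, by omega⟩, by
          have h : μ ⟨2*d - 2, by omega⟩ ≤ μ ⟨i.1, by omega⟩ :=
            hanti (Fin.mk_le_mk.2 (by omega))
          have h' := hpos.trans_le h
          rw [hσ] at h'
          exact h'.ne'⟩ : {j // hherm.eigenvalues j ≠ 0})) := by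
      intro i j hij
      have h := σ.injective (congrArg Subtype.val hij)
      exact Fin.ext (Fin.mk.inj h)
    have hcard := Fintype.card_le_of_injective _ hinj
    rw [← hherm.rank_eq_card_non_zero_eigs, Fintype.card_fin] at hcard
    omega
  have h1 : μ ⟨2*d - 1, by omega⟩ = 0 :=
    le_antisymm (h2 ▸ hanti (Fin.mk_le_mk.2 (by omega))) (hnn _)
  rw [h1, h2]
  simpa using h0
end

section
/- Let d ≥ 2 and let ρ be a (2d)×(2d) positive semidefinite complex Hermitian matrix with trace 1 and rank exactly 2d−1, whose eigenvalues in nonincreasing order λ₁ ≥ λ₂ ≥ ⋯ ≥ λ_{2d} satisfy the absolute-separability eigenvalue condition λ₁ − λ_{2d−1} − 2√(λ_{2d−2} λ_{2d}) ≤ 0. Then λ₁ = λ₂ = ⋯ = λ_{2d−1} = 1/(2d−1) and λ_{2d} = 0. -/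
/-!
Rank `2d - 1` means that exactly one eigenvalue vanishes, and in the nonincreasing order it must be
the last one, `λ_{2d}`: otherwise all eigenvalues would be positive and `ρ` would have full rank.
The square root in the absolute-separability condition is then zero, so the condition reads
`λ₁ ≤ λ_{2d-1}`. By monotonicity the first `2d - 1` eigenvalues coincide, and since they sum to
`tr ρ = 1`, each of them equals `1 / (2d - 1)`.
-/

open Matrix
open scoped ComplexOrder

/-- If a state in dimension `2 ⊗ d` has rank exactly `2d−1` and satisfies the
absolute-separability eigenvalue condition `λ₁ − λ_{2d−1} − 2√(λ_{2d−2} λ_{2d}) ≤ 0`, then its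
nonincreasing eigenvalues are `λ₁ = ⋯ = λ_{2d−1} = 1/(2d−1)` and `λ_{2d} = 0`. -/
theorem AS_rank_2d_minus_1_eigenvalues {d : ℕ} (hd : 2 ≤ d)
    (ρ : Matrix (Fin (2*d)) (Fin (2*d)) ℂ)
    (hherm : ρ.IsHermitian) (hpsd : ρ.PosSemidef) (htr : ρ.trace = 1)
    (hrank : ρ.rank = 2*d - 1)
    (μ : Fin (2*d) → ℝ) (hanti : Antitone μ)
    (hperm : ∃ σ : Equiv.Perm (Fin (2*d)), μ = hherm.eigenvalues ∘ σ)
    (hAS : μ ⟨0, by omega⟩ - μ ⟨2*d - 2, by omega⟩ -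
      2 * Real.sqrt (μ ⟨2*d - 3, by omega⟩ * μ ⟨2*d - 1, by omega⟩) ≤ 0) :
    (∀ i : Fin (2*d), (i : ℕ) < 2*d - 1 → μ i = 1 / (2*(d : ℝ) - 1)) ∧
      μ ⟨2*d - 1, by omega⟩ = 0 := by
  obtain ⟨σ, rfl⟩ := hperm
  set μ : Fin (2*d) → ℝ := hherm.eigenvalues ∘ σ with hμ
  have hnonneg : ∀ i, 0 ≤ μ i := fun i => hpsd.eigenvalues_nonneg (σ i)
  have hsum : ∑ i, μ i = 1 := by
    have h := hherm.trace_eq_sum_eigenvalues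
    rw [htr] at h
    have h' : ∑ i, hherm.eigenvalues i = 1 := by
      have h2 : ((∑ i, hherm.eigenvalues i : ℝ) : ℂ) = 1 := by
        rw [h]; push_cast; rfl
      exact_mod_cast h2
    rw [← h']
    exact Equiv.sum_comp σ hherm.eigenvalues
  have hlast : μ ⟨2*d - 1, by omega⟩ = 0 := by
    by_contra hne
    have hpos : ∀ i, hherm.eigenvalues i ≠ 0 := by
      intro i
      have h1 : μ ⟨2*d - 1, by omega⟩ ≤ μ (σ.symm i) :=
        hanti (Fin.le_def.2 (by have := (σ.symm i).isLt; simp only; omega))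
      have h2 : μ (σ.symm i) = hherm.eigenvalues i := by simp [hμ]
      have h3 := lt_of_le_of_ne (hnonneg ⟨2*d - 1, by omega⟩) (Ne.symm hne)
      rw [← h2]
      exact (h3.trans_le h1).ne'
    have hfull : ρ.rank = 2*d := by
      rw [hherm.rank_eq_card_non_zero_eigs,
        Fintype.card_congr (Equiv.subtypeUnivEquiv hpos), Fintype.card_fin]
    omega
  refine ⟨?_, hlast⟩
  rw [hlast, mul_zero, Real.sqrt_zero, mul_zero, sub_zero] at hAS
  have hconst : ∀ i : Fin (2*d), (i : ℕ) < 2*d - 1 → μ i = μ ⟨0, by omega⟩ := by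
    intro i hi
    have h1 : μ i ≤ μ ⟨0, by omega⟩ := hanti (Fin.le_def.2 (Nat.zero_le _))
    have h2 : μ ⟨2*d - 2, by omega⟩ ≤ μ i := hanti (Fin.le_def.2 (by simp only; omega))
    linarith
  -- Writing `μ` as a constant minus a correction at the last index makes the sum immediate.
  have hform : ∀ i, μ i =
      μ ⟨0, by omega⟩ - if i = ⟨2*d - 1, by omega⟩ then μ ⟨0, by omega⟩ else 0 := by
    intro i
    split_ifs with h
    · rw [h, hlast, sub_self]
    · rw [sub_zero]
      refine hconst i ?_
      have := i.isLt
      have h' : (i : ℕ) ≠ 2*d - 1 := fun e => h (Fin.ext e)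
      omega
  have hval : (2*(d : ℝ) - 1) * μ ⟨0, by omega⟩ = 1 := by
    rw [Finset.sum_congr rfl fun i _ => hform i, Finset.sum_sub_distrib, Finset.sum_const,
      Finset.sum_ite_eq' Finset.univ, if_pos (Finset.mem_univ _), Finset.card_univ,
      Fintype.card_fin, nsmul_eq_mul] at hsum
    push_cast at hsum
    linarith
  have hd' : (2 : ℝ) ≤ d := by exact_mod_cast hd
  intro i hi
  rw [hconst i hi, eq_div_iff (by linarith), mul_comm]
  exact hval
end

section
/- Fix θ ∈ ℝ. Let U(θ) be the 4×4 real orthogonal matrix with rows (cos θ, 0, 0, sin θ), (0, cos θ, sin θ, 0), (0, sin θ, −cos θ, 0), (sin θ, 0, 0, −cos θ), let V_CNOT be the 4×4 permutation matrix with rows (1,0,0,0), (0,1,0,0), (0,0,0,1), (0,0,1,0), and let L_s(θ) = (U(θ)·V_CNOT + V_CNOT·U(θ))/2. Let ρ = (1/3)·diag(1,1,1,0). Then Tr(L_s(θ) ρ L_s(θ)†) ≠ 0, and the eigenvalues of the normalized output state ρ_f = L_s(θ) ρ L_s(θ)† / Tr(L_s(θ) ρ L_s(θ)†), arranged in nonincreasing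 order, are 4/(3(3+cos 2θ)), 1/3, 2(1+cos 2θ)/(3(3+cos 2θ)), and 0. -/
/-!
Write `L = Lsθ θ`. Since `ρ₃ = (1/3) P` with `P = diag(1,1,1,0)` a projection, the unnormalized
output is `(1/3) (L P) (L P)ᴴ`, which has the same characteristic polynomial as `(1/3) G`, with
`G = (L P)ᴴ (L P)` the Gram matrix (`charpoly_output`). With `c = cos θ` and `s = sin θ`, `G` splits
into the block `[c² + s²/2, s²/2; s²/2, c² + s²/2]`, with eigenvalues `1` and `c²`, and the
diagonal entries `(1 + c²)/2` and `0`. The trace of the output is `(1 + c²)/2 = (3 + cos 2θ)/4`, and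
dividing by it gives the four eigenvalues. Equality of characteristic polynomials determines the
eigenvalues as a multiset, hence up to a permutation of the indices.
-/

open Matrix
open scoped ComplexOrder

/-- The global unitary `U(θ)` of Eq. (7). -/
noncomputable def Uθ (θ : ℝ) : Matrix (Fin 4) (Fin 4) ℂ :=
  !![(Real.cos θ : ℂ), 0, 0, (Real.sin θ : ℂ);
     0, (Real.cos θ : ℂ), (Real.sin θ : ℂ), 0;
     0, (Real.sin θ : ℂ), -(Real.cos θ : ℂ), 0;
     (Real.sin θ : ℂ), 0, 0, -(Real.cos θ : ℂ)]

/-- The CNOT gate. -/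
noncomputable def Vcnot : Matrix (Fin 4) (Fin 4) ℂ :=
  !![1, 0, 0, 0; 0, 1, 0, 0; 0, 0, 0, 1; 0, 0, 1, 0]

/-- The switch operator `L_s(θ) = (U(θ)·CNOT + CNOT·U(θ))/2`. -/
noncomputable def Lsθ (θ : ℝ) : Matrix (Fin 4) (Fin 4) ℂ :=
  (1/2 : ℂ) • (Uθ θ * Vcnot + Vcnot * Uθ θ)

/-- The rank-3 boundary absolutely separable state `ρ = (1/3)·diag(1,1,1,0)`. -/
noncomputable def ρ₃ : Matrix (Fin 4) (Fin 4) ℂ :=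
  (1/3 : ℂ) • !![1, 0, 0, 0; 0, 1, 0, 0; 0, 0, 1, 0; 0, 0, 0, 0]

/-- The eigenvalues of a Hermitian matrix are, up to order, the roots of its characteristic
polynomial, given in factored form. -/
lemma exists_perm_eigenvalues_of_charpoly {n : Type*} [Fintype n] [DecidableEq n]
    {A : Matrix n n ℂ} (hA : A.IsHermitian) (v : n → ℝ)
    (h : A.charpoly = ∏ i, (Polynomial.X - Polynomial.C (v i : ℂ))) :
    ∃ σ : Equiv.Perm n, hA.eigenvalues ∘ σ = v := by
  have h1 := hA.roots_charpoly_eq_eigenvalues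
  have h0 : (∏ i, (Polynomial.X - Polynomial.C (v i : ℂ))).roots =
      Multiset.map (fun i => (v i : ℂ)) Finset.univ.val := by
    rw [← Polynomial.roots_multiset_prod_X_sub_C (Multiset.map (fun i => (v i : ℂ)) _),
      Multiset.map_map]
    rfl
  rw [h, h0] at h1
  have h2 : Multiset.map v Finset.univ.val = Multiset.map hA.eigenvalues Finset.univ.val := by
    apply Multiset.map_injective Complex.ofReal_injective
    rw [Multiset.map_map, Multiset.map_map]
    exact h1
  -- Equal multisets of values have fibers of equal size, and bijections of the fibers glue.
  have h3 : ∀ x, Nonempty ({i // v i = x} ≃ {i // hA.eigenvalues i = x}) := by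
    intro x
    have h4 := congrArg (Multiset.count x) h2
    rw [Multiset.count_map, Multiset.count_map] at h4
    rw [← Fintype.card_eq, Fintype.card_subtype, Fintype.card_subtype]
    simp only [eq_comm (b := x)]
    exact h4
  exact ⟨Equiv.ofFiberEquiv fun x => (h3 x).some,
    funext fun i => Equiv.ofFiberEquiv_map (fun x => (h3 x).some) i⟩

lemma charpoly_smul_gram (k x : ℂ) :
    (k • !![(1 + x) / 2, (1 - x) / 2, 0, 0;
        (1 - x) / 2, (1 + x) / 2, 0, 0;
        0, 0, (1 + x) / 2, 0;
        0, 0, 0, 0]).charpoly =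
      (Polynomial.X - Polynomial.C k) * (Polynomial.X - Polynomial.C (k * ((1 + x) / 2))) *
        (Polynomial.X - Polynomial.C (k * x)) * Polynomial.X := by
  -- The symmetric block has eigenvalues equal to the sum and the difference of its entries.
  have h1 : k = k * ((1 + x) / 2) + k * ((1 - x) / 2) := by ring
  have h2 : k * x = k * ((1 + x) / 2) - k * ((1 - x) / 2) := by ring
  have h3 : (Polynomial.X - Polynomial.C k : Polynomial ℂ) =
      Polynomial.X - Polynomial.C (k * ((1 + x) / 2) + k * ((1 - x) / 2)) := by rw [← h1]
  rw [h2, h3]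
  generalize (1 + x) / 2 = a
  generalize (1 - x) / 2 = b
  simp [Matrix.charpoly, Matrix.charmatrix, Matrix.det_succ_row_zero, Fin.sum_univ_succ,
    Fin.succAbove]
  ring

/-- The explicit form of the switch operator. -/
lemma Lsθ_eq (θ : ℝ) : Lsθ θ =
    !![(Real.cos θ : ℂ), 0, (Real.sin θ : ℂ) / 2, (Real.sin θ : ℂ) / 2;
       0, (Real.cos θ : ℂ), (Real.sin θ : ℂ) / 2, (Real.sin θ : ℂ) / 2;
       (Real.sin θ : ℂ) / 2, (Real.sin θ : ℂ) / 2, 0, -(Real.cos θ : ℂ);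
       (Real.sin θ : ℂ) / 2, (Real.sin θ : ℂ) / 2, -(Real.cos θ : ℂ), 0] := by
  ext i j
  fin_cases i <;> fin_cases j <;>
    simp [Lsθ, Uθ, Vcnot] <;> ring

lemma conjTranspose_Lsθ (θ : ℝ) : (Lsθ θ)ᴴ = Lsθ θ := by
  rw [Lsθ_eq]
  ext i j
  fin_cases i <;> fin_cases j <;>
    simp [Matrix.conjTranspose_apply, -Complex.ofReal_cos, -Complex.ofReal_sin]

/-- The trace of `L ρ L†`, i.e. the probability of the outcome. -/
lemma trace_output (θ : ℝ) :
    (Lsθ θ * ρ₃ * (Lsθ θ)ᴴ).trace = (((1 + Real.cos θ ^ 2) / 2 : ℝ) : ℂ) := by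
  have h : (Real.sin θ : ℂ) ^ 2 = 1 - (Real.cos θ : ℂ) ^ 2 := by
    exact_mod_cast Real.sin_sq θ
  rw [conjTranspose_Lsθ, Lsθ_eq]
  simp [ρ₃, Matrix.trace, Fin.sum_univ_four, -Complex.ofReal_cos,
    -Complex.ofReal_sin]
  linear_combination (1 / 2) * h

/-- With `P = 3 ρ₃`, a projection, `L P L† = (L P) (P L†)` has the characteristic polynomial of
`(P L†) (L P)`; the latter is the sparse Gram matrix of the first three columns of `L`, padded by
zeros. -/
lemma charpoly_output (θ : ℝ) (k : ℂ) :
    (k • (Lsθ θ * ρ₃ * (Lsθ θ)ᴴ)).charpoly =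
      (k • (1 / 3 : ℂ) • !![((1 + Real.cos θ ^ 2) / 2 : ℂ), (1 - Real.cos θ ^ 2) / 2, 0, 0;
        (1 - Real.cos θ ^ 2) / 2, (1 + Real.cos θ ^ 2) / 2, 0, 0;
        0, 0, (1 + Real.cos θ ^ 2) / 2, 0;
        0, 0, 0, 0]).charpoly := by
  have h : (Real.sin θ : ℂ) ^ 2 = 1 - (Real.cos θ : ℂ) ^ 2 := by
    exact_mod_cast Real.sin_sq θ
  -- `P` is the projection with `ρ₃ = (1/3) P`.
  let P : Matrix (Fin 4) (Fin 4) ℂ := !![1, 0, 0, 0; 0, 1, 0, 0; 0, 0, 1, 0; 0, 0, 0, 0]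
  have hP : P * P = P := by
    ext i j
    fin_cases i <;> fin_cases j <;> simp [P, Matrix.mul_apply, Fin.sum_univ_four]
  have e : k • (Lsθ θ * ρ₃ * (Lsθ θ)ᴴ) = (k • (1 / 3 : ℂ) • (Lsθ θ * P)) * (P * Lsθ θ) := by
    have hρ : ρ₃ = (1 / 3 : ℂ) • P := rfl
    rw [conjTranspose_Lsθ, hρ]
    simp only [Matrix.smul_mul, Matrix.mul_smul]
    rw [Matrix.mul_assoc (Lsθ θ) P (P * Lsθ θ), ← Matrix.mul_assoc P P, hP, Matrix.mul_assoc]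
  rw [e, Matrix.charpoly_mul_comm, Matrix.mul_smul, Matrix.mul_smul]
  congr 3
  rw [Lsθ_eq]
  ext i j
  fin_cases i <;> fin_cases j <;>
    simp [P, Matrix.mul_apply, Fin.sum_univ_four, -Complex.ofReal_cos, -Complex.ofReal_sin] <;>
    first | ring1 | linear_combination (1 / 2) * h

/-- The switch output on the rank-3 boundary state has nonzero outcome probability, and the
eigenvalues of the normalized output, in nonincreasing order, are
`4/(3(3+cos 2θ)), 1/3, 2(1+cos 2θ)/(3(3+cos 2θ)), 0`. -/
theorem switch_output_eigenvalues_rank3 (θ : ℝ) :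
    (Lsθ θ * ρ₃ * (Lsθ θ)ᴴ).trace ≠ 0 ∧
    Antitone (![4 / (3*(3 + Real.cos (2*θ))), 1/3,
        2*(1 + Real.cos (2*θ)) / (3*(3 + Real.cos (2*θ))), 0] : Fin 4 → ℝ) ∧
    ∃ (hf : ((Lsθ θ * ρ₃ * (Lsθ θ)ᴴ).trace⁻¹ • (Lsθ θ * ρ₃ * (Lsθ θ)ᴴ)).IsHermitian)
      (σ : Equiv.Perm (Fin 4)),
      hf.eigenvalues ∘ σ = ![4 / (3*(3 + Real.cos (2*θ))), 1/3,
        2*(1 + Real.cos (2*θ)) / (3*(3 + Real.cos (2*θ))), 0] := by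
  have hc : Real.cos (2 * θ) = 2 * Real.cos θ ^ 2 - 1 := Real.cos_two_mul θ
  have hc0 : 0 ≤ Real.cos θ ^ 2 := sq_nonneg _
  have hc1 : Real.cos θ ^ 2 ≤ 1 := Real.cos_sq_le_one θ
  have hT : (0 : ℝ) < (1 + Real.cos θ ^ 2) / 2 := by positivity
  have hD : 0 < 3 * (3 + Real.cos (2 * θ)) := by rw [hc]; linarith
  refine ⟨?_, ?_, ?_, ?_⟩
  · rw [trace_output]
    exact_mod_cast hT.ne'
  · rw [Fin.antitone_iff_succ_le]
    intro i
    fin_cases i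
    · change (1 / 3 : ℝ) ≤ 4 / (3*(3 + Real.cos (2*θ)))
      rw [div_le_div_iff₀ (by norm_num) hD]
      linarith
    · change 2*(1 + Real.cos (2*θ)) / (3*(3 + Real.cos (2*θ))) ≤ (1 / 3 : ℝ)
      rw [div_le_div_iff₀ hD (by norm_num)]
      linarith
    · change (0 : ℝ) ≤ 2*(1 + Real.cos (2*θ)) / (3*(3 + Real.cos (2*θ)))
      apply div_nonneg _ hD.le
      linarith
  · rw [trace_output, ← Complex.ofReal_inv]
    have hρ : ρ₃.IsHermitian := by
      ext i j
      fin_cases i <;> fin_cases j <;> simp [ρ₃, Matrix.conjTranspose_apply]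
    have := Matrix.isHermitian_mul_mul_conjTranspose (Lsθ θ) hρ
    rw [Matrix.IsHermitian, Matrix.conjTranspose_smul, this.eq, RCLike.star_def, Complex.conj_ofReal]
  · apply exists_perm_eigenvalues_of_charpoly
    rw [charpoly_output, trace_output, hc]
    have hne : (1 + Complex.cos θ ^ 2) ≠ 0 := by
      exact_mod_cast (by linarith : (1 + Real.cos θ ^ 2) ≠ 0)
    have hd : 3 + (2 * Real.cos θ ^ 2 - 1) = 2 * (1 + Real.cos θ ^ 2) := by ring
    have e1 : ((4 / (3 * (2 * (1 + Real.cos θ ^ 2))) : ℝ) : ℂ) =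
        (((1 + Real.cos θ ^ 2) / 2 : ℝ) : ℂ)⁻¹ * (1 / 3) := by
      push_cast
      field_simp
      norm_num
    have e2 : ((1 / 3 : ℝ) : ℂ) =
        (((1 + Real.cos θ ^ 2) / 2 : ℝ) : ℂ)⁻¹ * (1 / 3) * ((1 + Real.cos θ ^ 2) / 2) := by
      push_cast
      field_simp
    have e3 : ((2 * (1 + (2 * Real.cos θ ^ 2 - 1)) / (3 * (2 * (1 + Real.cos θ ^ 2))) : ℝ) : ℂ) =
        (((1 + Real.cos θ ^ 2) / 2 : ℝ) : ℂ)⁻¹ * (1 / 3) * Real.cos θ ^ 2 := by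
      push_cast
      field_simp
      ring
    simp only [Fin.prod_univ_four, Matrix.cons_val]
    rw [hd, e1, e2, e3, smul_smul, charpoly_smul_gram]
    simp only [Complex.ofReal_zero, Polynomial.C_0, sub_zero]
end

section
/- Fix θ ∈ ℝ with cos 2θ < 1. With U(θ), V_CNOT, L_s(θ) = (U(θ)·V_CNOT + V_CNOT·U(θ))/2 and ρ = (1/3)·diag(1,1,1,0) as above, let λ₁ ≥ λ₂ ≥ λ₃ ≥ λ₄ be the eigenvalues of ρ_f = L_s(θ) ρ L_s(θ)† / Tr(L_s(θ) ρ L_s(θ)†) in nonincreasing order. Then λ₁ − λ₃ − 2√(λ₂ λ₄) = 2(1 − cos 2θ)/(3(3 + cos 2θ)) > 0; that is, ρ_f violates the absolute-separability eigenvalue condition and hence is not absolutely separable. -/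
/-!
Write `L = L_s(θ)` and `c = cos θ`. The products `L ρ Lᴴ` and `ρ Lᴴ L` have the same characteristic
polynomial and the same trace, and `ρ Lᴴ L` is far simpler: up to a factor it consists of the first
three rows of a block-diagonal matrix with two equal symmetric blocks `!![a, b; b, a]`, where
`a = 1 + c²` and `b = sin² θ` (`rho_mul_gram`). Its characteristic polynomial splits by inspection
(`charpoly_truncated`), and after normalization by the trace `(1 + c²)/2` the eigenvalues of `ρ_f`
are `2/(3(1 + c²)) ≥ 1/3 ≥ 2c²/(3(1 + c²)) ≥ 0`. As the smallest one vanishes, so does the square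
root in the eigenvalue condition, and what remains is `λ₁ - λ₃ = 2(1 - c²)/(3(1 + c²))`.
-/


open Matrix
open scoped ComplexOrder

lemma rho_mul_gram (θ : ℝ) : ρ₃ * ((Lsθ θ)ᴴ * Lsθ θ) =
    (1/6 : ℂ) • !![1 + (Real.cos θ : ℂ)^2, (Real.sin θ : ℂ)^2, 0, 0;
       (Real.sin θ : ℂ)^2, 1 + (Real.cos θ : ℂ)^2, 0, 0;
       0, 0, 1 + (Real.cos θ : ℂ)^2, (Real.sin θ : ℂ)^2;
       0, 0, 0, 0] := by
  have h : Complex.sin θ ^ 2 = 1 - Complex.cos θ ^ 2 := Complex.sin_sq θ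
  have h2 : (starRingEnd ℂ) 2 = 2 := map_ofNat _ 2
  ext i j
  fin_cases i <;> fin_cases j <;>
    simp [ρ₃, Lsθ, Uθ, Vcnot, Matrix.mul_apply, Fin.sum_univ_four, ← Complex.cos_conj,
      ← Complex.sin_conj, h2] <;>
    first
    | ring1
    | linear_combination (1/6 : ℂ) * h

lemma charpoly_truncated (a b t : ℂ) :
    (t • !![a, b, 0, 0; b, a, 0, 0; 0, 0, a, b; 0, 0, 0, 0]).charpoly =
      (Polynomial.X - Polynomial.C (t * (a + b))) * (Polynomial.X - Polynomial.C (t * a)) *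
        (Polynomial.X - Polynomial.C (t * (a - b))) * (Polynomial.X - Polynomial.C 0) := by
  simp [Matrix.charpoly, Matrix.charmatrix, Matrix.det_succ_row_zero, Fin.sum_univ_succ,
    Fin.succAbove]
  ring

lemma trace_switch (θ : ℝ) :
    (Lsθ θ * ρ₃ * (Lsθ θ)ᴴ).trace = (1 + (Real.cos θ : ℂ)^2) / 2 := by
  rw [Matrix.mul_assoc, Matrix.trace_mul_comm, Matrix.mul_assoc, rho_mul_gram]
  simp [Matrix.trace, Fin.sum_univ_four]
  ring

/-- The eigenvalues of the normalized switch output, in nonincreasing order. -/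
noncomputable def switchSpectrum (θ : ℝ) : Fin 4 → ℝ :=
  ![2 / (3 * (1 + Real.cos θ ^ 2)), 1 / 3, 2 * Real.cos θ ^ 2 / (3 * (1 + Real.cos θ ^ 2)), 0]

lemma switchSpectrum_antitone (θ : ℝ) : Antitone (switchSpectrum θ) := by
  have hc : Real.cos θ ^ 2 ≤ 1 := Real.cos_sq_le_one θ
  have hp : 0 < 3 * (1 + Real.cos θ ^ 2) := by positivity
  have h₁ : 1 / 3 ≤ 2 / (3 * (1 + Real.cos θ ^ 2)) := by
    rw [div_le_div_iff₀ (by norm_num) hp]; linarith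
  have h₂ : 2 * Real.cos θ ^ 2 / (3 * (1 + Real.cos θ ^ 2)) ≤ 1 / 3 := by
    rw [div_le_div_iff₀ hp (by norm_num)]; linarith
  have h₃ : 0 ≤ 2 * Real.cos θ ^ 2 / (3 * (1 + Real.cos θ ^ 2)) := by positivity
  refine Fin.antitone_iff_succ_le.2 fun i => ?_
  fin_cases i
  exacts [h₁, h₂, h₃]

lemma charpoly_switch (θ : ℝ) :
    ((Lsθ θ * ρ₃ * (Lsθ θ)ᴴ).trace⁻¹ • (Lsθ θ * ρ₃ * (Lsθ θ)ᴴ)).charpoly =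
      ∏ i, (Polynomial.X - Polynomial.C (switchSpectrum θ i : ℂ)) := by
  have hne : (1 + (Real.cos θ : ℂ)^2) ≠ 0 := by
    have : (1 + Real.cos θ ^ 2 : ℝ) ≠ 0 := by positivity
    exact_mod_cast this
  have hs : (Real.sin θ : ℂ)^2 = 1 - (Real.cos θ : ℂ)^2 := by
    exact_mod_cast Real.sin_sq θ
  rw [trace_switch, Matrix.mul_assoc, ← Matrix.mul_smul, Matrix.charpoly_mul_comm,
    Matrix.smul_mul, Matrix.mul_assoc, rho_mul_gram, smul_smul, charpoly_truncated, hs,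
    Fin.prod_univ_four]
  simp only [switchSpectrum, Matrix.cons_val, Complex.ofReal_div, Complex.ofReal_mul,
    Complex.ofReal_add, Complex.ofReal_pow, Complex.ofReal_one, Complex.ofReal_ofNat,
    Complex.ofReal_zero]
  generalize (Real.cos θ : ℂ) = c at hne ⊢
  have h₀ : ((1 + c ^ 2) / 2)⁻¹ * (1 / 6) * (1 + c ^ 2 + (1 - c ^ 2)) =
      2 / (3 * (1 + c ^ 2)) := by
    field_simp
    ring
  have h₁ : ((1 + c ^ 2) / 2)⁻¹ * (1 / 6) * (1 + c ^ 2) = 1 / 3 := by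
    field_simp
    norm_num
  have h₂ : ((1 + c ^ 2) / 2)⁻¹ * (1 / 6) * (1 + c ^ 2 - (1 - c ^ 2)) =
      2 * c ^ 2 / (3 * (1 + c ^ 2)) := by
    field_simp
    ring
  rw [h₀, h₁, h₂]

/-- An antitone finite sequence is determined by the multiset of its values. -/
lemma antitone_eq_of_multiset_eq {n : ℕ} {u v : Fin n → ℝ} (hu : Antitone u) (hv : Antitone v)
    (h : Multiset.map u Finset.univ.val = Multiset.map v Finset.univ.val) : u = v := by
  rw [Fin.univ_val_map, Fin.univ_val_map, Multiset.coe_eq_coe] at h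
  exact List.ofFn_injective (h.eq_of_sortedGE hu.sortedGE_ofFn hv.sortedGE_ofFn)

/-- For `cos 2θ < 1`, the normalized switch output on the rank-3 boundary state violates the
absolute-separability eigenvalue condition:
`λ₁ − λ₃ − 2√(λ₂λ₄) = 2(1 − cos 2θ)/(3(3 + cos 2θ)) > 0`. -/
theorem switch_output_breaks_AS_rank3 (θ : ℝ) (hθ : Real.cos (2*θ) < 1)
    (hf : ((Lsθ θ * ρ₃ * (Lsθ θ)ᴴ).trace⁻¹ • (Lsθ θ * ρ₃ * (Lsθ θ)ᴴ)).IsHermitian)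
    (μ : Fin 4 → ℝ) (hanti : Antitone μ)
    (hperm : ∃ σ : Equiv.Perm (Fin 4), μ = hf.eigenvalues ∘ σ) :
    μ 0 - μ 2 - 2 * Real.sqrt (μ 1 * μ 3)
        = 2*(1 - Real.cos (2*θ)) / (3*(3 + Real.cos (2*θ))) ∧
      0 < 2*(1 - Real.cos (2*θ)) / (3*(3 + Real.cos (2*θ))) := by
  obtain ⟨σ, rfl⟩ := hperm
  have hroots := hf.roots_charpoly_eq_eigenvalues
  rw [charpoly_switch, Polynomial.roots_prod _ _
    (by simp [Finset.prod_ne_zero_iff, Polynomial.X_sub_C_ne_zero])] at hroots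
  simp only [Polynomial.roots_X_sub_C, Multiset.bind_singleton] at hroots
  have hmul : Multiset.map (switchSpectrum θ) Finset.univ.val =
      Multiset.map hf.eigenvalues Finset.univ.val := by
    apply Multiset.map_injective Complex.ofReal_injective
    rw [Multiset.map_map, Multiset.map_map]
    exact hroots
  have hσ : Multiset.map (hf.eigenvalues ∘ σ) Finset.univ.val =
      Multiset.map hf.eigenvalues Finset.univ.val := by
    rw [← Multiset.map_map, Multiset.map_univ_val_equiv]
  rw [antitone_eq_of_multiset_eq hanti (switchSpectrum_antitone θ) (hσ.trans hmul.symm)]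
  have hden : 0 < 3 + Real.cos (2*θ) := by linarith [Real.neg_one_le_cos (2*θ)]
  refine ⟨?_, div_pos (by linarith) (by linarith)⟩
  have hp : 1 + Real.cos θ ^ 2 ≠ 0 := by positivity
  rw [Real.cos_two_mul] at hden ⊢
  have h3 : 3 + (2 * Real.cos θ ^ 2 - 1) ≠ 0 := hden.ne'
  simp only [switchSpectrum, Matrix.cons_val, mul_zero, Real.sqrt_zero]
  field_simp
  ring
end

section
/- Let p ∈ [0,1], γ, φ ∈ ℝ, |ξ⟩ = cos γ |00⟩ + e^{iφ} sin γ |11⟩, and ρ_W = p |ξ⟩⟨ξ| + ((1−p)/4)·1₄. Let λ₁ ≥ λ₂ ≥ λ₃ ≥ λ₄ be the eigenvalues of ρ_W in nonincreasing order. Then the absolute-separability eigenvalue condition λ₁ − λ₃ − 2√(λ₂ λ₄) ≤ 0 holds if and only if p ≤ 1/3; i.e., the modified Werner state is absolutely separable precisely in the range 0 ≤ p ≤ 1/3. -/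
/-!
Write `b = (1 - p) / 4`. Since `|ξ⟩` is a unit vector, `P = |ξ⟩⟨ξ|` is idempotent, so every
eigenvalue `a` of `ρ_W = p P + b` satisfies `(a - b) (a - b - p) = 0`, i.e. `a ∈ {b, b + p}`.
The trace of `ρ_W` is `1 = 4 b + p`, which forces the ordered spectrum to be `(b + p, b, b, b)`.
The eigenvalue condition then reads `p - 2 b ≤ 0`, which is `p ≤ 1 / 3`.
-/

open Matrix
open scoped ComplexOrder

/-- The pure state `|ξ⟩ = cos γ |00⟩ + e^{iφ} sin γ |11⟩` in `ℂ⁴ ≅ ℂ²⊗ℂ²`. -/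
noncomputable def ξvec (γ φ : ℝ) : Fin 4 → ℂ :=
  ![(Real.cos γ : ℂ), 0, 0, Complex.exp (φ * Complex.I) * (Real.sin γ : ℂ)]

/-- The modified Werner state `ρ_W = p |ξ⟩⟨ξ| + ((1−p)/4)·1₄`. -/
noncomputable def ρW (p γ φ : ℝ) : Matrix (Fin 4) (Fin 4) ℂ :=
  (p : ℂ) • Matrix.vecMulVec (ξvec γ φ) (star (ξvec γ φ)) + (((1 - p)/4 : ℝ) : ℂ) • 1

theorem star_ξvec_dotProduct (γ φ : ℝ) : star (ξvec γ φ) ⬝ᵥ ξvec γ φ = 1 := by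
  have h1 : (starRingEnd ℂ) (Complex.exp (φ * Complex.I)) * Complex.exp (φ * Complex.I) = 1 := by
    rw [← Complex.exp_conj, ← Complex.exp_add]
    simp
  have h2 : (Real.cos γ : ℂ) ^ 2 + (Real.sin γ : ℂ) ^ 2 = 1 := by
    exact_mod_cast Real.cos_sq_add_sin_sq γ
  simp only [dotProduct, Fin.sum_univ_four, ξvec, Pi.star_apply, Matrix.cons_val,
    Complex.star_def, map_mul, Complex.conj_ofReal]
  linear_combination h2 + (Real.sin γ : ℂ) ^ 2 * h1

theorem trace_ρW (p γ φ : ℝ) : (ρW p γ φ).trace = 1 := by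
  rw [ρW, trace_add, trace_smul, trace_smul, trace_vecMulVec, dotProduct_comm,
    star_ξvec_dotProduct, trace_one]
  simp only [smul_eq_mul, Fintype.card_fin]
  push_cast
  ring

/-- Each eigenvalue of `ρ_W` is `(1 - p) / 4` or `(1 - p) / 4 + p`. The relation holds because
`|ξ⟩⟨ξ|` is idempotent. -/
theorem eigenvalues_ρW_quadratic (p γ φ : ℝ) (h : (ρW p γ φ).IsHermitian) (i : Fin 4) :
    (h.eigenvalues i - (1 - p) / 4) * (h.eigenvalues i - (1 - p) / 4 - p) = 0 := by
  have hv := h.mulVec_eigenvectorBasis i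
  have hne : (⇑(h.eigenvectorBasis i) : Fin 4 → ℂ) ≠ 0 := by
    intro h0
    exact h.eigenvectorBasis.orthonormal.ne_zero i (by ext j; exact congrFun h0 j)
  generalize (⇑(h.eigenvectorBasis i) : Fin 4 → ℂ) = v at hv hne
  generalize h.eigenvalues i = a at hv
  have hj : ∀ j, (p : ℂ) * ((star (ξvec γ φ) ⬝ᵥ v) * ξvec γ φ j)
      = ((a - (1 - p) / 4 : ℝ) : ℂ) * v j := by
    intro j
    have := congrFun hv j
    simp only [ρW, add_mulVec, smul_mulVec, one_mulVec, vecMulVec_mulVec, Pi.add_apply,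
      Pi.smul_apply, smul_eq_mul, MulOpposite.smul_eq_mul_unop, MulOpposite.unop_op,
      Complex.real_smul] at this
    push_cast at this ⊢
    linear_combination this
  -- pair the eigenvector equation with `ξ`, using that `ξ` is a unit vector
  have hc : (p : ℂ) * (star (ξvec γ φ) ⬝ᵥ v)
      = ((a - (1 - p) / 4 : ℝ) : ℂ) * (star (ξvec γ φ) ⬝ᵥ v) := by
    have e : ((p : ℂ) * (star (ξvec γ φ) ⬝ᵥ v)) • ξvec γ φ
        = ((a - (1 - p) / 4 : ℝ) : ℂ) • v := by
      ext j
      simpa [mul_assoc] using hj j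
    have := congrArg (fun w => star (ξvec γ φ) ⬝ᵥ w) e
    simpa only [dotProduct_smul, star_ξvec_dotProduct, smul_eq_mul, mul_one] using this
  obtain ⟨j, hvj⟩ := Function.ne_iff.mp hne
  have key : (((a - (1 - p) / 4) * (a - (1 - p) / 4 - p) : ℝ) : ℂ) * v j = 0 := by
    push_cast at hj hc ⊢
    linear_combination (-(a - (1 - p) / 4) + p : ℂ) * hj j - (p : ℂ) * ξvec γ φ j * hc
  exact_mod_cast (mul_eq_zero.mp key).resolve_right hvj

/-- The modified Werner state satisfies the absolute-separability eigenvalue condition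
`λ₁ − λ₃ − 2√(λ₂λ₄) ≤ 0` (with eigenvalues in nonincreasing order) if and only if
`p ≤ 1/3`. -/
theorem modified_werner_AS_iff (p γ φ : ℝ) (hp0 : 0 ≤ p) (hp1 : p ≤ 1)
    (h : (ρW p γ φ).IsHermitian)
    (μ : Fin 4 → ℝ) (hanti : Antitone μ)
    (hperm : ∃ σ : Equiv.Perm (Fin 4), μ = h.eigenvalues ∘ σ) :
    μ 0 - μ 2 - 2 * Real.sqrt (μ 1 * μ 3) ≤ 0 ↔ p ≤ 1/3 := by
  obtain ⟨σ, hσ⟩ := hperm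
  have hq : ∀ i, μ i = (1 - p) / 4 ∨ μ i = (1 - p) / 4 + p := by
    intro i
    have := eigenvalues_ρW_quadratic p γ φ h (σ i)
    rw [hσ, Function.comp_apply]
    rcases mul_eq_zero.mp this with h' | h'
    · left; linarith
    · right; linarith
  have hs : μ 0 + μ 1 + μ 2 + μ 3 = 1 := by
    have ht : ∑ i, h.eigenvalues i = 1 := by
      have := h.trace_eq_sum_eigenvalues
      rw [trace_ρW] at this
      apply Complex.ofReal_injective
      rw [Complex.ofReal_sum, Complex.ofReal_one]
      exact this.symm
    rw [← Fin.sum_univ_four, ← ht, hσ]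
    exact Equiv.sum_comp σ h.eigenvalues
  have a01 : μ 1 ≤ μ 0 := hanti (by decide)
  have a12 : μ 2 ≤ μ 1 := hanti (by decide)
  have a23 : μ 3 ≤ μ 2 := hanti (by decide)
  obtain ⟨e0, e1, e2, e3⟩ : μ 0 = (1 - p) / 4 + p ∧ μ 1 = (1 - p) / 4 ∧ μ 2 = (1 - p) / 4 ∧
      μ 3 = (1 - p) / 4 := by
    rcases hq 0 with h0 | h0 <;> rcases hq 1 with h1 | h1 <;> rcases hq 2 with h2 | h2 <;>
      rcases hq 3 with h3 | h3 <;> refine ⟨?_, ?_, ?_, ?_⟩ <;> linarith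
  rw [e0, e1, e2, e3, Real.sqrt_mul_self (by linarith)]
  constructor <;> intro _ <;> linarith
end

section
/- Let p ∈ [0,1], γ ∈ [0, π/2], φ ∈ ℝ, |ξ⟩ = cos γ |00⟩ + e^{iφ} sin γ |11⟩, and ρ_W = p |ξ⟩⟨ξ| + ((1−p)/4)·1₄. Then the partial transpose of ρ_W with respect to the second qubit is positive semidefinite if and only if p ≤ 1/(1 + 2 sin 2γ); i.e., by the Peres–Horodecki criterion, ρ_W is separable exactly for p ≤ 1/(1 + 2 sin 2γ). -/
/-!
The partial transpose of `ρ_W` splits as `D + p cos γ sin γ |w⟩⟨w|` with `w = |01⟩ + e^{iφ} |10⟩` and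
`D` a real diagonal matrix whose entries are `p cos² γ + q`, `q - p cos γ sin γ` (twice) and
`p sin² γ + q`, where `q = (1 - p)/4` (`ptB_ρW_eq`). If `p cos γ sin γ ≤ q`, both summands are positive
semidefinite. Conversely, `|01⟩ - e^{iφ} |10⟩` is an eigenvector with eigenvalue
`q - p cos γ sin γ`, so that this number must be nonnegative. Finally
`p cos γ sin γ ≤ q` is a rewriting of `p (1 + 2 sin 2γ) ≤ 1`.
-/

open Matrix
open scoped ComplexOrder

/-- Combine two qubit indices `i, j ∈ {0,1}` into the index `2i+j ∈ {0,…,3}` of `ℂ⁴ ≅ ℂ²⊗ℂ²`. -/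
def idx2 (i j : Fin 2) : Fin 4 :=
  ⟨2 * i.val + j.val, by have := i.isLt; have := j.isLt; omega⟩

/-- First-qubit index of a basis index of `ℂ⁴ ≅ ℂ²⊗ℂ²`. -/
def q1 (x : Fin 4) : Fin 2 := ⟨x.val / 2, by have := x.isLt; omega⟩

/-- Second-qubit index of a basis index of `ℂ⁴ ≅ ℂ²⊗ℂ²`. -/
def q2 (x : Fin 4) : Fin 2 := ⟨x.val % 2, by have := x.isLt; omega⟩

/-- Partial transpose with respect to the second qubit:
`M^{T_B}_{(i,j),(k,l)} = M_{(i,l),(k,j)}`. -/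
def ptB (M : Matrix (Fin 4) (Fin 4) ℂ) : Matrix (Fin 4) (Fin 4) ℂ :=
  fun x y => M (idx2 (q1 x) (q2 y)) (idx2 (q1 y) (q2 x))

/-- The vector `|01⟩ + e^{iφ} |10⟩`, not normalized. -/
noncomputable def wvec (φ : ℝ) : Fin 4 → ℂ :=
  ![0, 1, Complex.exp (φ * Complex.I), 0]

/-- The real diagonal part in the decomposition of the partial transpose of `ρ_W`. -/
noncomputable def diagPart (p γ : ℝ) : Fin 4 → ℝ :=
  ![p * Real.cos γ ^ 2 + (1 - p) / 4, (1 - p) / 4 - p * (Real.cos γ * Real.sin γ),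
    (1 - p) / 4 - p * (Real.cos γ * Real.sin γ), p * Real.sin γ ^ 2 + (1 - p) / 4]

lemma exp_mul_conj_exp (φ : ℝ) :
    Complex.exp (φ * Complex.I) * (starRingEnd ℂ) (Complex.exp (φ * Complex.I)) = 1 := by
  rw [Complex.mul_conj, Complex.normSq_eq_norm_sq, Complex.norm_exp_ofReal_mul_I]
  simp

lemma ptB_ρW_eq (p γ φ : ℝ) :
    ptB (ρW p γ φ) = Matrix.diagonal (fun i => (diagPart p γ i : ℂ)) +
      ((p * (Real.cos γ * Real.sin γ) : ℝ) : ℂ) • Matrix.vecMulVec (wvec φ) (star (wvec φ)) := by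
  have h := exp_mul_conj_exp φ
  ext i j
  simp only [ptB, ρW, Matrix.add_apply, Matrix.smul_apply, Matrix.vecMulVec_apply, Pi.star_apply]
  fin_cases i <;> fin_cases j <;>
    simp [ξvec, idx2, q1, q2, wvec, diagPart,
      -Complex.ofReal_cos, -Complex.ofReal_sin] <;>
    first
    | done
    | ring1
    | linear_combination (-p * (Real.cos γ * Real.sin γ) : ℂ) * h
    | exact Or.inl (by ring1)
    | exact Or.inl (by linear_combination (Real.sin γ ^ 2 : ℂ) * h)

/-- Peres–Horodecki for the modified Werner state: the partial transpose of `ρ_W` is positive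
semidefinite (i.e. `ρ_W` is separable) if and only if `p ≤ 1/(1 + 2 sin 2γ)`. -/
theorem modified_werner_PPT_iff (p γ φ : ℝ) (hp0 : 0 ≤ p) (hp1 : p ≤ 1)
    (hγ0 : 0 ≤ γ) (hγ1 : γ ≤ Real.pi / 2) :
    (ptB (ρW p γ φ)).PosSemidef ↔ p ≤ 1 / (1 + 2 * Real.sin (2*γ)) := by
  have hc : 0 ≤ Real.cos γ := Real.cos_nonneg_of_mem_Icc ⟨by linarith [Real.pi_pos], hγ1⟩
  have hs : 0 ≤ Real.sin γ := Real.sin_nonneg_of_nonneg_of_le_pi hγ0 (by linarith [Real.pi_pos])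
  have hcs : 0 ≤ Real.cos γ * Real.sin γ := mul_nonneg hc hs
  have key : p ≤ 1 / (1 + 2 * Real.sin (2 * γ)) ↔
      0 ≤ (1 - p) / 4 - p * (Real.cos γ * Real.sin γ) := by
    rw [Real.sin_two_mul, le_div_iff₀ (by linarith)]
    constructor <;> intro h <;> linarith
  rw [key, ptB_ρW_eq]
  constructor
  · intro h
    -- the eigenvector orthogonal to `wvec φ` in the span of `|01⟩` and `|10⟩`
    have h2 := h.dotProduct_mulVec_nonneg ![0, 1, -Complex.exp (φ * Complex.I), 0]
    have he := exp_mul_conj_exp φ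
    have h3 : star ![0, 1, -Complex.exp (φ * Complex.I), 0] ⬝ᵥ
        ((Matrix.diagonal (fun i => (diagPart p γ i : ℂ)) +
          ((p * (Real.cos γ * Real.sin γ) : ℝ) : ℂ) •
            Matrix.vecMulVec (wvec φ) (star (wvec φ))) *ᵥ
          ![0, 1, -Complex.exp (φ * Complex.I), 0]) =
        ((2 * ((1 - p) / 4 - p * (Real.cos γ * Real.sin γ)) : ℝ) : ℂ) := by
      simp only [Matrix.mulVec, dotProduct, Fin.sum_univ_four, Matrix.add_apply,
        Matrix.smul_apply, Matrix.vecMulVec_apply, Pi.star_apply]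
      simp [wvec, diagPart, -Complex.ofReal_cos, -Complex.ofReal_sin]
      -- off by a multiple of `|e^{iφ}|² - 1`
      linear_combination
        ((1 - p) / 4 - p * (Real.cos γ * Real.sin γ) + p * (Real.cos γ * Real.sin γ) *
          (Complex.exp (φ * Complex.I) * (starRingEnd ℂ) (Complex.exp (φ * Complex.I)) - 1) : ℂ)
          * he
    rw [h3, Complex.zero_le_real] at h2
    linarith
  · intro h
    refine Matrix.PosSemidef.add (Matrix.PosSemidef.diagonal fun i => ?_)
      ((Matrix.posSemidef_vecMulVec_self_star _).smul ?_)
    · have hq : 0 ≤ (1 - p) / 4 := by linarith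
      rw [Pi.zero_apply, Complex.zero_le_real]
      fin_cases i
      · exact add_nonneg (mul_nonneg hp0 (sq_nonneg _)) hq
      · exact h
      · exact h
      · exact add_nonneg (mul_nonneg hp0 (sq_nonneg _)) hq
    · rw [Complex.zero_le_real]
      exact mul_nonneg hp0 hcs
end

section
/- Let L_s = (U(π/2)·V_CNOT + V_CNOT·U(π/2))/2, where U(π/2) is the 4×4 antidiagonal matrix with all antidiagonal entries equal to 1 and V_CNOT is the permutation matrix with rows (1,0,0,0),(0,1,0,0),(0,0,0,1),(0,0,1,0). Then for the two-qubit maximally mixed state ρ = (1/4)·1₄, one has Tr(L_s ρ L_s†) = 1/2 and the normalized output ρ_f = L_s ρ L_s† / Tr(L_s ρ L_s†) equals (1₂/2) ⊗ |+⟩⟨+|, where |+⟩ = (|0⟩+|1⟩)/√2 ∈ ℂ². In particular ρ_f is a product (hence separable) state of rank 2 whose nonincreasing eigenvalues λ₁=λ₂=1/2, λ₃=λ₄=0 satisfy λ₁ − λ₃ − 2√(λ₂ λ₄) = 1/2 > 0, violating the absolute-separability eigenvalue condition. -/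
/-!
A direct computation shows that the unnormalized output is one eighth of the block diagonal matrix
with two all-ones `2 × 2` blocks. Its trace is `1/2`, and after normalization it is the matrix
`ρout` below, which is the Kronecker product `(1₂/2) ⊗ |+⟩⟨+|`.

The spectrum needs no characteristic polynomial: `ρout` is Hermitian with `ρout² = ρout/2`, so each
eigenvalue is `0` or `1/2`, and since the trace is `1` exactly two of them are `1/2`. The rank is
the number of nonzero eigenvalues.
-/

open Matrix
open scoped Kronecker ComplexOrder

/-- `U(π/2)`: the 4×4 antidiagonal matrix with all antidiagonal entries 1 (i.e. `X ⊗ X`). -/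
noncomputable def Uhalfπ : Matrix (Fin 4) (Fin 4) ℂ :=
  !![0, 0, 0, 1; 0, 0, 1, 0; 0, 1, 0, 0; 1, 0, 0, 0]

/-- The switch operator `L_s = (U(π/2)·CNOT + CNOT·U(π/2))/2`. -/
noncomputable def Lshalfπ : Matrix (Fin 4) (Fin 4) ℂ :=
  (1/2 : ℂ) • (Uhalfπ * Vcnot + Vcnot * Uhalfπ)

/-- The vector `|+⟩ = (|0⟩+|1⟩)/√2 ∈ ℂ²`. -/
noncomputable def plusVec : Fin 2 → ℂ := ![((Real.sqrt 2 : ℂ))⁻¹, ((Real.sqrt 2 : ℂ))⁻¹]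

/-- The two-qubit maximally mixed state `1₄/4`. -/
noncomputable def ρmm : Matrix (Fin 4) (Fin 4) ℂ := (1/4 : ℂ) • 1

/-- The normalized output state: block diagonal, with two `2 × 2` blocks all of whose entries are
`1/4`. -/
noncomputable def ρout : Matrix (Fin 4) (Fin 4) ℂ :=
  !![1/4, 1/4, 0, 0; 1/4, 1/4, 0, 0; 0, 0, 1/4, 1/4; 0, 0, 1/4, 1/4]

lemma switch_output : Lshalfπ * ρmm * Lshalfπᴴ = (1/2 : ℂ) • ρout := by
  ext i j
  fin_cases i <;> fin_cases j <;>
    simp [Lshalfπ, Uhalfπ, Vcnot, ρmm, ρout, Matrix.mul_apply, Fin.sum_univ_four] <;>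
    norm_num [Complex.conj_ofNat]

lemma trace_ρout : ρout.trace = 1 := by
  simp [ρout, Matrix.trace, Fin.sum_univ_four]
  norm_num

lemma trace_switch_output : (Lshalfπ * ρmm * Lshalfπᴴ).trace = 1/2 := by
  rw [switch_output, Matrix.trace_smul, trace_ρout, smul_eq_mul, mul_one]

lemma normalized_output :
    (Lshalfπ * ρmm * Lshalfπᴴ).trace⁻¹ • (Lshalfπ * ρmm * Lshalfπᴴ) = ρout := by
  rw [trace_switch_output, switch_output, smul_smul]
  norm_num

lemma ρout_isHermitian : ρout.IsHermitian := by
  ext i j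
  fin_cases i <;> fin_cases j <;> simp [ρout]

/-- Twice the output state is a projection. -/
lemma ρout_mul_self : ρout * ρout = (1/2 : ℂ) • ρout := by
  ext i j
  fin_cases i <;> fin_cases j <;>
    simp [ρout, Matrix.mul_apply, Fin.sum_univ_four] <;> norm_num

lemma plusVec_entry (i j : Fin 2) : Matrix.vecMulVec plusVec (star plusVec) i j = 1/2 := by
  have h : ((Real.sqrt 2 : ℂ))⁻¹ * ((Real.sqrt 2 : ℂ))⁻¹ = 1/2 := by
    rw [← mul_inv, ← Complex.ofReal_mul, Real.mul_self_sqrt (by norm_num)]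
    norm_num
  fin_cases i <;> fin_cases j <;> simpa [Matrix.vecMulVec_apply, plusVec] using h

lemma ρout_eq_kronecker :
    ρout = Matrix.reindex finProdFinEquiv finProdFinEquiv
      (((1/2 : ℂ) • (1 : Matrix (Fin 2) (Fin 2) ℂ)) ⊗ₖ
        Matrix.vecMulVec plusVec (star plusVec)) := by
  rw [← Equiv.symm_apply_eq]
  ext ⟨a, b⟩ ⟨c, d⟩
  rw [Matrix.kroneckerMap_apply, plusVec_entry]
  fin_cases a <;> fin_cases b <;> fin_cases c <;> fin_cases d <;>
    norm_num [ρout, finProdFinEquiv]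

/-- Applying `ρout² = ρout/2` to an eigenvector gives `μ² = μ/2` for its eigenvalue `μ`. -/
lemma ρout_eigenvalues_mem (hf : ρout.IsHermitian) (i : Fin 4) :
    hf.eigenvalues i = 0 ∨ hf.eigenvalues i = 1/2 := by
  set v := hf.eigenvectorBasis i with hv
  have h1 := hf.mulVec_eigenvectorBasis i
  rw [← hv] at h1
  have h2 : ρout *ᵥ (ρout *ᵥ v.ofLp) = (1/2 : ℂ) • (ρout *ᵥ v.ofLp) := by
    rw [Matrix.mulVec_mulVec, ρout_mul_self, Matrix.smul_mulVec]
  rw [h1, Matrix.mulVec_smul, h1] at h2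
  have hne : v.ofLp ≠ 0 := by
    intro h0
    exact hf.eigenvectorBasis.orthonormal.ne_zero i (by ext k; exact congrFun h0 k)
  obtain ⟨k, hk⟩ := Function.ne_iff.mp hne
  have h3 := congrFun h2 k
  simp only [Pi.smul_apply, Complex.real_smul, smul_eq_mul] at h3
  have h4 : ((hf.eigenvalues i : ℝ) : ℂ) * (hf.eigenvalues i - 1/2) = 0 :=
    mul_right_cancel₀ hk (by linear_combination h3)
  have h5 : hf.eigenvalues i * (hf.eigenvalues i - 1/2) = 0 := by
    apply Complex.ofReal_injective
    push_cast
    exact h4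
  rcases mul_eq_zero.mp h5 with h | h
  · exact Or.inl h
  · exact Or.inr (sub_eq_zero.mp h)

lemma ρout_eigenvalues (hf : ρout.IsHermitian) :
    ∃ σ : Equiv.Perm (Fin 4), hf.eigenvalues ∘ σ = ![1/2, 1/2, 0, 0] := by
  -- sorting the negated eigenvalues puts the eigenvalues in nonincreasing order
  let σ := Tuple.sort (fun i => -hf.eigenvalues i)
  have hmono := Tuple.monotone_sort (fun i => -hf.eigenvalues i)
  have h01 : -hf.eigenvalues (σ 0) ≤ -hf.eigenvalues (σ 1) := hmono (by decide)
  have h12 : -hf.eigenvalues (σ 1) ≤ -hf.eigenvalues (σ 2) := hmono (by decide)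
  have h23 : -hf.eigenvalues (σ 2) ≤ -hf.eigenvalues (σ 3) := hmono (by decide)
  have hsum : ∑ i, hf.eigenvalues (σ i) = 1 := by
    rw [Equiv.sum_comp σ hf.eigenvalues]
    have h := hf.trace_eq_sum_eigenvalues
    rw [trace_ρout] at h
    apply Complex.ofReal_injective
    push_cast
    exact h.symm
  rw [Fin.sum_univ_four] at hsum
  refine ⟨σ, ?_⟩
  -- the only nonincreasing sequence of values in `{0, 1/2}` with sum `1` is `1/2, 1/2, 0, 0`
  have key : hf.eigenvalues (σ 0) = 1/2 ∧ hf.eigenvalues (σ 1) = 1/2 ∧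
      hf.eigenvalues (σ 2) = 0 ∧ hf.eigenvalues (σ 3) = 0 := by
    rcases ρout_eigenvalues_mem hf (σ 0) with a | a <;>
    rcases ρout_eigenvalues_mem hf (σ 1) with b | b <;>
    rcases ρout_eigenvalues_mem hf (σ 2) with c | c <;>
    rcases ρout_eigenvalues_mem hf (σ 3) with d | d <;>
    refine ⟨?_, ?_, ?_, ?_⟩ <;> linarith
  obtain ⟨a, b, c, d⟩ := key
  ext i
  fin_cases i
  exacts [a, b, c, d]

lemma ρout_rank : ρout.rank = 2 := by
  obtain ⟨σ, hσ⟩ := ρout_eigenvalues ρout_isHermitian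
  rw [ρout_isHermitian.rank_eq_card_non_zero_eigs]
  have e : {i : Fin 4 // (![1/2, 1/2, 0, 0] : Fin 4 → ℝ) i ≠ 0} ≃
      {i // ρout_isHermitian.eigenvalues i ≠ 0} :=
    σ.subtypeEquiv fun i => by rw [← hσ]; rfl
  rw [← Fintype.card_congr e, Fintype.card_subtype, Finset.card_filter, Fin.sum_univ_four]
  simp

/-- Switching CNOT with `U(π/2)` on the maximally mixed state: outcome probability `1/2`, the
normalized output equals the product state `(1₂/2) ⊗ |+⟩⟨+|`, has rank 2, and its nonincreasing
eigenvalues `1/2, 1/2, 0, 0` violate the absolute-separability condition: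
`λ₁ − λ₃ − 2√(λ₂λ₄) = 1/2 > 0`. -/
theorem switch_breaks_AS_maximally_mixed :
    (Lshalfπ * ρmm * Lshalfπᴴ).trace = 1/2 ∧
    (Lshalfπ * ρmm * Lshalfπᴴ).trace⁻¹ • (Lshalfπ * ρmm * Lshalfπᴴ)
      = Matrix.reindex finProdFinEquiv finProdFinEquiv
          (((1/2 : ℂ) • (1 : Matrix (Fin 2) (Fin 2) ℂ)) ⊗ₖ
            Matrix.vecMulVec plusVec (star plusVec)) ∧
    ((Lshalfπ * ρmm * Lshalfπᴴ).trace⁻¹ • (Lshalfπ * ρmm * Lshalfπᴴ)).rank = 2 ∧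
    (∃ (hf : ((Lshalfπ * ρmm * Lshalfπᴴ).trace⁻¹ • (Lshalfπ * ρmm * Lshalfπᴴ)).IsHermitian)
        (σ : Equiv.Perm (Fin 4)),
      hf.eigenvalues ∘ σ = ![1/2, 1/2, 0, 0]) ∧
    (1/2 : ℝ) - 0 - 2 * Real.sqrt ((1/2) * 0) = 1/2 ∧ (0 : ℝ) < 1/2 := by
  rw [normalized_output]
  refine ⟨trace_switch_output, ρout_eq_kronecker, ρout_rank,
    ⟨ρout_isHermitian, ρout_eigenvalues ρout_isHermitian⟩, ?_, ?_⟩ <;> norm_num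
end

section
/- Let L_s = (U(π/2)·V_CNOT + V_CNOT·U(π/2))/2, where U(π/2) is the 4×4 antidiagonal matrix with all antidiagonal entries equal to 1 and V_CNOT is the permutation matrix with rows (1,0,0,0),(0,1,0,0),(0,0,0,1),(0,0,1,0). Then L_s has rank 2, and consequently for every 4×4 positive semidefinite matrix ρ with Tr(L_s ρ L_s†) ≠ 0, the normalized output state ρ_f = L_s ρ L_s† / Tr(L_s ρ L_s†) has rank at most 2; hence its nonincreasing eigenvalues satisfy λ₃ = λ₄ = 0 and λ₁ − λ₃ − 2√(λ₂ λ₄) = λ₁ > 0, so ρ_f violates the absolute-separability eigenvalue condition. In particular, the switch of CNOT with U(π/2) maps every two-qubit state with nonzero outcome probability outside the set of absolutely separable states. -/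
/-!
The columns of `L_s` are, up to the factor `1/2`, only the two vectors `e₂ + e₃` and `e₀ + e₁`, each
occurring twice. So `L_s` factors through `ℂ²`, and a `2 × 2` compression of it is invertible: its
rank is exactly 2. Rank is submultiplicative and does not grow under scaling, so the normalized
output has rank at most 2. The output is also positive semidefinite of trace 1. The rank of a
Hermitian matrix counts its nonzero eigenvalues, so at most two of the nonnegative ordered
eigenvalues survive, and the largest is positive because they sum to 1.
-/

open Matrix
open scoped ComplexOrder

theorem Lshalfπ_eq : Lshalfπ =
    (1/2 : ℂ) • !![0, 0, 1, 1; 0, 0, 1, 1; 1, 1, 0, 0; 1, 1, 0, 0] := by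
  unfold Lshalfπ Uhalfπ Vcnot
  congr 1
  ext i j
  fin_cases i <;> fin_cases j <;> simp

theorem Lshalfπ_rank : Lshalfπ.rank = 2 := by
  apply le_antisymm
  · have h : Lshalfπ = (!![0, 1; 0, 1; 1, 0; 1, 0] : Matrix (Fin 4) (Fin 2) ℂ) *
        (!![1/2, 1/2, 0, 0; 0, 0, 1/2, 1/2] : Matrix (Fin 2) (Fin 4) ℂ) := by
      rw [Lshalfπ_eq]
      ext i j
      fin_cases i <;> fin_cases j <;> simp [Matrix.mul_apply, Fin.sum_univ_two]
    rw [h]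
    exact (Matrix.rank_mul_le_left _ _).trans (Matrix.rank_le_width _)
  -- Rows 2, 0 against columns 0, 2, with entries doubled, give the `2 × 2` identity.
  · have h : (!![0, 0, 1, 0; 1, 0, 0, 0] : Matrix (Fin 2) (Fin 4) ℂ) * Lshalfπ *
        (!![2, 0; 0, 0; 0, 2; 0, 0] : Matrix (Fin 4) (Fin 2) ℂ) = 1 := by
      rw [Lshalfπ_eq]
      ext i j
      fin_cases i <;> fin_cases j <;>
        simp [Matrix.mul_apply, Fin.sum_univ_four]
    have h2 := congrArg Matrix.rank h
    rw [Matrix.rank_one, Fintype.card_fin] at h2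
    rw [← h2]
    exact (Matrix.rank_mul_le_left _ _).trans (Matrix.rank_mul_le_right _ _)

/-- A positive semidefinite `4 × 4` matrix of trace 1 and rank at most 2 has ordered eigenvalues
`μ 0 > 0` and `μ 2 = μ 3 = 0`. -/
theorem ordered_eigenvalues_of_rank_le_two {A : Matrix (Fin 4) (Fin 4) ℂ} (hA : A.PosSemidef)
    (htr : A.trace = 1) (hr : A.rank ≤ 2) (hf : A.IsHermitian) {μ : Fin 4 → ℝ}
    (hμ : Antitone μ) {σ : Equiv.Perm (Fin 4)} (hσ : μ = hf.eigenvalues ∘ σ) :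
    μ 2 = 0 ∧ μ 3 = 0 ∧ 0 < μ 0 := by
  have hnn : ∀ i, 0 ≤ μ i := fun i => by
    rw [hσ]; exact hA.eigenvalues_nonneg _
  have hsum : ∑ i, μ i = 1 := by
    have h := hf.trace_eq_sum_eigenvalues
    rw [htr] at h
    rw [hσ]
    simp only [Function.comp_apply]
    rw [Equiv.sum_comp σ hf.eigenvalues]
    exact Complex.ofReal_injective (by simpa using h.symm)
  have h01 : μ 1 ≤ μ 0 := hμ (by decide)
  have h12 : μ 2 ≤ μ 1 := hμ (by decide)
  have h23 : μ 3 ≤ μ 2 := hμ (by decide)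
  have h3 := hnn 3
  have h2 : μ 2 = 0 := by
    by_contra hne
    have hpos : 0 < μ 2 := lt_of_le_of_ne (hnn 2) (Ne.symm hne)
    -- Otherwise the three largest eigenvalues are all nonzero, forcing rank at least 3.
    have hinj : Function.Injective (fun k : Fin 3 =>
        (⟨σ k.castSucc, by
          have hk : μ 2 ≤ μ k.castSucc := hμ (by
            rw [Fin.le_def]; simp; omega)
          have := hpos.trans_le hk
          rw [hσ] at this
          exact this.ne'⟩ : {i // hf.eigenvalues i ≠ 0})) := by
      intro a b hab
      simpa using hab
    have hc := Fintype.card_le_of_injective _ hinj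
    rw [← hf.rank_eq_card_non_zero_eigs, Fintype.card_fin] at hc
    omega
  rw [Fin.sum_univ_four] at hsum
  refine ⟨h2, by linarith, by linarith⟩

/-- `L_s = (U(π/2)·CNOT + CNOT·U(π/2))/2` has rank 2; hence for every two-qubit state with
nonzero outcome probability, the normalized switch output has rank at most 2, so its
nonincreasing eigenvalues satisfy `λ₃ = λ₄ = 0` and `λ₁ − λ₃ − 2√(λ₂λ₄) = λ₁ > 0`: the output
always violates the absolute-separability eigenvalue condition. -/
theorem switch_halfπ_always_breaks_AS :
    Lshalfπ.rank = 2 ∧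
    ∀ ρ : Matrix (Fin 4) (Fin 4) ℂ, ρ.PosSemidef →
      (Lshalfπ * ρ * Lshalfπᴴ).trace ≠ 0 →
      ((Lshalfπ * ρ * Lshalfπᴴ).trace⁻¹ • (Lshalfπ * ρ * Lshalfπᴴ)).rank ≤ 2 ∧
      ∀ (hf : ((Lshalfπ * ρ * Lshalfπᴴ).trace⁻¹ • (Lshalfπ * ρ * Lshalfπᴴ)).IsHermitian)
        (μ : Fin 4 → ℝ), Antitone μ →
        (∃ σ : Equiv.Perm (Fin 4), μ = hf.eigenvalues ∘ σ) →
        μ 2 = 0 ∧ μ 3 = 0 ∧ μ 0 - μ 2 - 2 * Real.sqrt (μ 1 * μ 3) = μ 0 ∧ 0 < μ 0 := by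
  refine ⟨Lshalfπ_rank, fun ρ hρ htr => ?_⟩
  have hB : (Lshalfπ * ρ * Lshalfπᴴ).PosSemidef := hρ.mul_mul_conjTranspose_same _
  generalize hBdef : Lshalfπ * ρ * Lshalfπᴴ = B at *
  have hrank : (B.trace⁻¹ • B).rank ≤ 2 := by
    rw [← Lshalfπ_rank, ← hBdef, Matrix.mul_assoc, ← Matrix.mul_smul]
    exact Matrix.rank_mul_le_left _ _
  refine ⟨hrank, fun hf μ hμ ⟨σ, hσ⟩ => ?_⟩
  have hps : (B.trace⁻¹ • B).PosSemidef := hB.smul (inv_nonneg.mpr hB.trace_nonneg)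
  have h1 : (B.trace⁻¹ • B).trace = 1 := by
    rw [Matrix.trace_smul, smul_eq_mul, inv_mul_cancel₀ htr]
  obtain ⟨h2, h3, h0⟩ := ordered_eigenvalues_of_rank_le_two hps h1 hrank hf hμ hσ
  exact ⟨h2, h3, by simp [h2, h3], h0⟩
end
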